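/- arXiv:0705.3949 — 7 statements merged into one kernel-verified Lean document; each statement's English description precedes it below -/
import Mathlib

section
/- Fix a model-state pair M,Γ. For any two object terms t₁, t₂, any assignment v, and the object constant i identifying the state Γ in Sta (i.e. I(i) = (v*I)(↓id,Γ)), the following holds: (v*I)(t₁,Γ) = (v*I)(t₂,Γ) if and only if ⟨v(ϱ₁),…,v(ϱₙ), i⟩ ∈ FT((t₁=t₂)(ϱ₁,…,ϱₙ))(I_M), where ϱ₁,…,ϱₙ is the list of variables occurring in t₁,t₂. -/
namespace KripkeDB

/-- Variable kinds: object variables and concept variables. -/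
inductive VKind : Type
  | obj : VKind
  | con : VKind

/-- A first-order modal model: an augmented frame `⟨G, {R_π}, D_o, D_c⟩` together with an
interpretation `I`.  `State` is the nonempty set of states, `acc r` is the accessibility
relation `R_r` for each relation symbol `r : RelSym`, `Obj` is the nonempty object domain
`D_o`, and the `m` individual concepts (functions from states to objects, `m = |D_c|`)
are indexed by `Fin m` via the bijection `𝔠` (0-based: the concept indexed by `i` has
`𝔠`-value `i+1`).  The concept indexed by `0` is the distinguished concept `id`
(so `𝔠(id) = 1`), whose value uniquely identifies each state.  By the unique names
assumption, constants are identified with the objects/concepts they denote. -/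
structure Model where
  State : Type
  state_ne : Nonempty State
  Obj : Type
  obj_ne : Nonempty Obj
  RelSym : Type
  acc : RelSym → State → State → Prop
  m : ℕ
  m_pos : 0 < m
  concept : Fin m → State → Obj
  id_inj : ∀ Γ Δ : State, concept ⟨0, m_pos⟩ Γ = concept ⟨0, m_pos⟩ Δ → Γ = Δ

/-- Database values: the domain **dom** = D_o ∪ D_c ∪ Π consists of objects,
concept names and accessibility-relation names. -/
abbrev V (M : Model) : Type := M.Obj ⊕ (Fin M.m ⊕ M.RelSym)

/-- The id-value of a state: `(v*I)(↓id, Γ)`. -/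
def idval (M : Model) (Γ : M.State) : M.Obj := M.concept ⟨0, M.m_pos⟩ Γ

/-- A relation instance: a set of tuples over the database domain. -/
abbrev Inst (M : Model) : Type := Set (List (V M))

noncomputable def deflt (M : Model) : V M := Sum.inl (Classical.choice M.obj_ne)

/-- 1-based attribute access `t(j)`. -/
noncomputable def att (M : Model) (t : List (V M)) (j : ℕ) : V M := t.getD (j - 1) (deflt M)

/-- Projection `π_{j₁,…,jₚ}`. -/
noncomputable def proj (M : Model) (js : List ℕ) (I : Inst M) : Inst M :=
  { u | ∃ t ∈ I, u = js.map (att M t) }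

/-- Selection `σ_{j=k}` (attribute `j` equals attribute `k`). -/
noncomputable def selEq (M : Model) (j k : ℕ) (I : Inst M) : Inst M :=
  { t | t ∈ I ∧ att M t j = att M t k }

/-- Selection `σ_{j=c}` (attribute `j` equals the constant `c`). -/
noncomputable def selC (M : Model) (j : ℕ) (c : V M) (I : Inst M) : Inst M :=
  { t | t ∈ I ∧ att M t j = c }

/-- Cross product `I × J`. -/
def cprod (M : Model) (I J : Inst M) : Inst M :=
  { l | ∃ t ∈ I, ∃ u ∈ J, l = t ++ u }

/-- The `Sta`-tuple of a state `Γ`: its `i`-th entry is the value at `Γ` of the concept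
with `𝔠`-value `i`. -/
def staTuple (M : Model) (Γ : M.State) : List (V M) :=
  List.ofFn (fun i : Fin M.m => Sum.inl (M.concept i Γ))

/-- The instance of the relation `Sta` in the database instance `I_M` associated with `M`. -/
def Sta (M : Model) : Inst M := { l | ∃ Γ : M.State, l = staTuple M Γ }

/-- The instance of the unary relation `Obj` (instance `D_o`) in `I_M`. -/
def ObjI (M : Model) : Inst M := { l | ∃ o : M.Obj, l = [Sum.inl o] }

/-- The instance of the unary relation `Con` (instance `D_c`) in `I_M`. -/
def ConI (M : Model) : Inst M := { l | ∃ c : Fin M.m, l = [Sum.inr (Sum.inl c)] }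

/-- The instance of the ternary relation `Rel` in `I_M`: it contains `⟨a,b,π⟩` iff
`R_π(Γ,Δ)` where `a,b` are the id-values of `Γ,Δ`. -/
def RelI (M : Model) : Inst M :=
  { l | ∃ (r : M.RelSym) (Γ Δ : M.State), M.acc r Γ Δ ∧
      l = [Sum.inl (idval M Γ), Sum.inl (idval M Δ), Sum.inr (Sum.inr r)] }

/-- Membership of a database value in the domain of a variable kind
(`D_o` for object variables, `D_c` for concept variables). -/
def kindOk (M : Model) : VKind → V M → Prop
  | VKind.obj, x => ∃ o : M.Obj, x = Sum.inl o
  | VKind.con, x => ∃ c : Fin M.m, x = Sum.inr (Sum.inl c)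

/-- `VT(ϱ₁,…,ϱₙ)`: the cross product `D₁ × … × Dₙ` of the domain relations, where `Dᵢ`
is `Con` for a concept variable and `Obj` for an object variable
(for the empty list this is `{⟨⟩}`). -/
def VTl (M : Model) (ks : List VKind) : Inst M :=
  { l | List.Forall₂ (kindOk M) ks l }

/-- Object terms: object constants (identified with objects via unique names),
object variables (de Bruijn index `k` denotes the variable `ϱ_{k+1}`), and
relativized concept terms `↓c` for a concept constant `c`. -/
inductive OTm (M : Model) : Type
  | const : M.Obj → OTm M
  | var : ℕ → OTm M
  | down : Fin M.m → OTm M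

/-- Term evaluation `(v*I)(·, Γ)`. -/
def teval (M : Model) (v : ℕ → V M) (Γ : M.State) : OTm M → V M
  | OTm.const o => Sum.inl o
  | OTm.var k => v k
  | OTm.down c => Sum.inl (M.concept c Γ)

/-- The result of the term translation `TT`: an attribute index or a constant. -/
inductive TTRes (M : Model) : Type
  | idx : ℕ → TTRes M
  | con : V M → TTRes M

/-- The term translation `TT` with `n` variables in scope: `TT(c) = 'c'` for an object
constant, `TT(ϱ_k) = k`, and `TT(↓t) = n + 𝔠(t)` for a relativized term. -/
def TT (M : Model) (n : ℕ) : OTm M → TTRes M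
  | OTm.const o => TTRes.con (Sum.inl o)
  | OTm.var k => TTRes.idx (k + 1)
  | OTm.down c => TTRes.idx (n + (c.val + 1))

/-- The value in tuple `t` designated by a `TT`-result. -/
noncomputable def ttval (M : Model) (t : List (V M)) : TTRes M → V M
  | TTRes.idx j => att M t j
  | TTRes.con c => c

/-- Generalized selection `σ_{a=b}` where each side is an attribute index or a constant. -/
noncomputable def selT (M : Model) (a b : TTRes M) (I : Inst M) : Inst M :=
  { t | t ∈ I ∧ ttval M t a = ttval M t b }

/-- Generalized selection `σ_{a≠b}`. -/
noncomputable def selTne (M : Model) (a b : TTRes M) (I : Inst M) : Inst M :=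
  { t | t ∈ I ∧ ttval M t a ≠ ttval M t b }

/-- The set of (indices of) variables occurring in a term. -/
def tvars (M : Model) : OTm M → Set ℕ
  | OTm.var k => {k}
  | _ => ∅

/-- Formulas of the modal language.  Binders (`ex`, `all`, `lam`) bind the de Bruijn
variable `0`; in `⟨λϱ.φ⟩(↓c)` the abstracted variable is an object variable and the
argument term is the relativized concept term `↓c`. -/
inductive Fma (M : Model) : Type
  | eq : OTm M → OTm M → Fma M
  | ne : OTm M → OTm M → Fma M
  | not : Fma M → Fma M
  | and : Fma M → Fma M → Fma M
  | or : Fma M → Fma M → Fma M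
  | dia : M.RelSym → Fma M → Fma M
  | box : M.RelSym → Fma M → Fma M
  | ex : VKind → Fma M → Fma M
  | all : VKind → Fma M → Fma M
  | lam : Fin M.m → Fma M → Fma M

/-- Extending an assignment with a value for the freshly bound variable. -/
def consA (M : Model) (d : V M) (v : ℕ → V M) : ℕ → V M
  | 0 => d
  | k + 1 => v k

/-- Truth in a model: `M,Γ ⊩_v φ`. -/
def Truth (M : Model) : M.State → (ℕ → V M) → Fma M → Prop
  | Γ, v, Fma.eq t₁ t₂ => teval M v Γ t₁ = teval M v Γ t₂
  | Γ, v, Fma.ne t₁ t₂ => teval M v Γ t₁ ≠ teval M v Γ t₂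
  | Γ, v, Fma.not φ => ¬ Truth M Γ v φ
  | Γ, v, Fma.and φ ψ => Truth M Γ v φ ∧ Truth M Γ v ψ
  | Γ, v, Fma.or φ ψ => Truth M Γ v φ ∨ Truth M Γ v ψ
  | Γ, v, Fma.dia r φ => ∃ Δ : M.State, M.acc r Γ Δ ∧ Truth M Δ v φ
  | Γ, v, Fma.box r φ => ∀ Δ : M.State, M.acc r Γ Δ → Truth M Δ v φ
  | Γ, v, Fma.ex k φ => ∃ d : V M, kindOk M k d ∧ Truth M Γ (consA M d v) φ
  | Γ, v, Fma.all k φ => ∀ d : V M, kindOk M k d → Truth M Γ (consA M d v) φ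
  | Γ, v, Fma.lam c φ => Truth M Γ (consA M (Sum.inl (M.concept c Γ)) v) φ

/-- The translation `FT` of modal queries into relational algebra queries, evaluated on
`I_M`.  `ks` is the list of kinds of the free variables `ϱ₁,…,ϱₙ` (so `n = ks.length`).
The box clause is `FT([π]φ) = FT(¬⟨π⟩¬φ)`, written out. -/
noncomputable def FT (M : Model) : List VKind → Fma M → Inst M
  | ks, Fma.eq t₁ t₂ =>
      proj M (List.range' 1 (ks.length + 1))
        (selT M (TT M ks.length t₁) (TT M ks.length t₂) (cprod M (VTl M ks) (Sta M)))
  | ks, Fma.ne t₁ t₂ =>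
      proj M (List.range' 1 (ks.length + 1))
        (selTne M (TT M ks.length t₁) (TT M ks.length t₂) (cprod M (VTl M ks) (Sta M)))
  | ks, Fma.not φ =>
      cprod M (VTl M ks) (proj M [1] (Sta M)) \ FT M ks φ
  | ks, Fma.and φ ψ => FT M ks φ ∩ FT M ks ψ
  | ks, Fma.or φ ψ => FT M ks φ ∪ FT M ks ψ
  | ks, Fma.dia r φ =>
      proj M (List.range' 1 ks.length ++ [ks.length + 2])
        (selC M (ks.length + 4) (Sum.inr (Sum.inr r))
          (selEq M (ks.length + 1) (ks.length + 3) (cprod M (FT M ks φ) (RelI M))))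
  | ks, Fma.box r φ =>
      cprod M (VTl M ks) (proj M [1] (Sta M)) \
        proj M (List.range' 1 ks.length ++ [ks.length + 2])
          (selC M (ks.length + 4) (Sum.inr (Sum.inr r))
            (selEq M (ks.length + 1) (ks.length + 3)
              (cprod M (cprod M (VTl M ks) (proj M [1] (Sta M)) \ FT M ks φ) (RelI M))))
  | ks, Fma.ex k φ =>
      proj M (List.range' 2 (ks.length + 1)) (FT M (k :: ks) φ)
  | ks, Fma.all k φ =>
      proj M (List.range' 2 (ks.length + 1)) (FT M (k :: ks) φ) \
        proj M (List.range' 2 (ks.length + 1))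
          (cprod M (VTl M [k]) (proj M (List.range' 2 (ks.length + 1)) (FT M (k :: ks) φ)) \
            FT M (k :: ks) φ)
  | ks, Fma.lam c φ =>
      proj M (List.range' 2 (ks.length + 1))
        (selEq M 1 (ks.length + 3)
          (selEq M (ks.length + 2) (ks.length + 4)
            (cprod M (FT M (VKind.obj :: ks) φ) (proj M [c.val + 1, 1] (Sta M)))))

/-- Well-formedness of a term in a context of variable kinds. -/
def WFt (M : Model) (ks : List VKind) : OTm M → Prop
  | OTm.const _ => True
  | OTm.var k => ks[k]? = some VKind.obj
  | OTm.down _ => True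

/-- Well-formedness of a formula in a context of variable kinds: a modal query
`φ(ϱ₁,…,ϱₙ)` is a well-formed formula whose free variables are among `ϱ₁,…,ϱₙ`. -/
def WF (M : Model) : List VKind → Fma M → Prop
  | ks, Fma.eq t₁ t₂ => WFt M ks t₁ ∧ WFt M ks t₂
  | ks, Fma.ne t₁ t₂ => WFt M ks t₁ ∧ WFt M ks t₂
  | ks, Fma.not φ => WF M ks φ
  | ks, Fma.and φ ψ => WF M ks φ ∧ WF M ks ψ
  | ks, Fma.or φ ψ => WF M ks φ ∧ WF M ks ψ
  | ks, Fma.dia _ φ => WF M ks φ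
  | ks, Fma.box _ φ => WF M ks φ
  | ks, Fma.ex k φ => WF M (k :: ks) φ
  | ks, Fma.all k φ => WF M (k :: ks) φ
  | ks, Fma.lam _ φ => WF M (VKind.obj :: ks) φ

/-- An assignment conforms to a context of kinds if it maps object variables into `D_o`
and concept variables into `D_c`. -/
def Conf (M : Model) (ks : List VKind) (v : ℕ → V M) : Prop :=
  ∀ k : Fin ks.length, kindOk M (ks.get k) (v k)


theorem aux_proj (M : Model) (n : ℕ) (l : List (V M)) (hl : l.length = n) (Δ : M.State) :
    (List.range' 1 (n + 1)).map (att M (l ++ staTuple M Δ)) = l ++ [Sum.inl (idval M Δ)] := by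
  have hm := M.m_pos
  apply List.ext_getElem
  · simp [hl]
  · intro k h1 h2
    have hk : k < n + 1 := by simpa using h1
    simp only [List.getElem_map, List.getElem_range', att]
    have e : 1 + 1 * k - 1 = k := by omega
    rw [e, List.getD_eq_getElem _ _ (by simp [staTuple]; omega)]
    by_cases hkn : k < n
    · rw [List.getElem_append_left (by omega), List.getElem_append_left (by omega)]
    · have : k = l.length := by omega
      subst this
      simp [staTuple, idval]

theorem aux_ttval (M : Model) (n : ℕ) (v : ℕ → M.Obj) (Δ : M.State) (t : OTm M)
    (ht : ∀ k ∈ tvars M t, k < n) :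
    ttval M (List.ofFn (fun j : Fin n => (Sum.inl (v j) : V M)) ++ staTuple M Δ) (TT M n t) =
      teval M (fun k => Sum.inl (v k)) Δ t := by
  cases t with
  | const o => rfl
  | var k =>
    have hk : k < n := ht k (by simp [tvars])
    simp only [TT, ttval, att, teval, Nat.add_sub_cancel]
    rw [List.getD_eq_getElem _ _ (by simp; omega), List.getElem_append_left (by simpa using hk)]
    simp
  | down c =>
    have hc := c.2
    simp only [TT, ttval, att, teval]
    have e : n + (c.val + 1) - 1 = n + c.val := by omega
    rw [e, List.getD_eq_getElem _ _ (by simp [staTuple]),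
      List.getElem_append_right (by simp)]
    simp [staTuple]

/-- Fix a model-state pair `M,Γ`.  For object terms `t₁, t₂`, an
assignment `v`, and the object constant `i` identifying `Γ` in `Sta`
(`I(i) = (v*I)(↓id,Γ)`): `(v*I)(t₁,Γ) = (v*I)(t₂,Γ)` iff
`⟨v(ϱ₁),…,v(ϱₙ), i⟩ ∈ FT((t₁=t₂)(ϱ₁,…,ϱₙ))(I_M)`, where `ϱ₁,…,ϱₙ` is the list of
variables occurring in `t₁,t₂` (de Bruijn indices `0,…,n-1`) and
`FT((t₁=t₂)(ϱ₁,…,ϱₙ)) = π_{1,…,n+1} σ_{TT(t₁)=TT(t₂)} (VT(ϱ₁,…,ϱₙ) × Sta)`. -/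
theorem atomic_eq_correspondence (M : Model) (Γ : M.State) (n : ℕ) (t₁ t₂ : OTm M)
    (hvars : tvars M t₁ ∪ tvars M t₂ = {k : ℕ | k < n})
    (v : ℕ → M.Obj) (i : M.Obj) (hi : i = idval M Γ) :
    teval M (fun k => Sum.inl (v k)) Γ t₁ = teval M (fun k => Sum.inl (v k)) Γ t₂ ↔
      (List.ofFn (fun j : Fin n => (Sum.inl (v j) : V M)) ++ [Sum.inl i]) ∈
        proj M (List.range' 1 (n + 1))
          (selT M (TT M n t₁) (TT M n t₂)
            (cprod M (VTl M (List.replicate n VKind.obj)) (Sta M))) := by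
  have h1 : ∀ k ∈ tvars M t₁, k < n := fun k hk => by
    have : k ∈ tvars M t₁ ∪ tvars M t₂ := Or.inl hk
    rw [hvars] at this
    exact this
  have h2 : ∀ k ∈ tvars M t₂, k < n := fun k hk => by
    have : k ∈ tvars M t₁ ∪ tvars M t₂ := Or.inr hk
    rw [hvars] at this
    exact this
  subst hi
  constructor
  · intro h
    refine ⟨List.ofFn (fun j : Fin n => (Sum.inl (v j) : V M)) ++ staTuple M Γ,
      ⟨⟨_, ?_, _, ⟨Γ, rfl⟩, rfl⟩, ?_⟩, ?_⟩
    · show List.Forall₂ _ _ _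
      rw [List.forall₂_iff_get]
      refine ⟨by simp, ?_⟩
      intro k hk hk'
      simp [kindOk]
    · rw [aux_ttval M n v Γ t₁ h1, aux_ttval M n v Γ t₂ h2]
      exact h
    · rw [aux_proj M n _ (by simp)]
  · rintro ⟨t, ⟨⟨l, hl, u, ⟨Δ, rfl⟩, rfl⟩, hsel⟩, he⟩
    have hlen : l.length = n := by
      have := List.Forall₂.length_eq hl
      simpa using this.symm
    rw [aux_proj M n l hlen] at he
    obtain ⟨e1, e2⟩ := List.append_inj he (by simp [hlen])
    have e3 : idval M Γ = idval M Δ := by simpa using e2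
    have e4 : Γ = Δ := M.id_inj _ _ e3
    subst e4
    subst e1
    rw [aux_ttval M n v Γ t₁ h1, aux_ttval M n v Γ t₂ h2] at hsel
    exact hsel

end KripkeDB
end

section
/- Fix a model-state pair M,Γ. For any two object terms t₁, t₂, any assignment v, and the object constant i identifying the state Γ in Sta (i.e. I(i) = (v*I)(↓id,Γ)), the following holds: (v*I)(t₁,Γ) ≠ (v*I)(t₂,Γ) if and only if ⟨v(ϱ₁),…,v(ϱₙ), i⟩ ∈ FT((t₁≠t₂)(ϱ₁,…,ϱₙ))(I_M), where ϱ₁,…,ϱₙ is the list of variables occurring in t₁,t₂. -/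
namespace KripkeDB

theorem map_att_aux (M : Model) (Δ : M.State) (a : List (V M)) :
    (List.range' 1 (a.length + 1)).map (att M (a ++ staTuple M Δ)) =
      a ++ [Sum.inl (idval M Δ)] := by
  have hm := M.m_pos
  apply List.ext_getElem
  · simp
  · intro k h1 h2
    have hk : k < a.length + 1 := by simpa using h1
    simp only [List.getElem_map, List.getElem_range', att]
    have e : 1 + 1 * k - 1 = k := by omega
    rw [e]
    rcases Nat.lt_or_ge k a.length with h | h
    · simp [List.getD_eq_getElem?_getD, List.getElem?_append_left h, List.getElem_append_left h, h]
    · have : k = a.length := by omega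
      subst this
      simp [List.getD_eq_getElem?_getD, staTuple, hm, idval]

theorem ttval_aux (M : Model) (Γ : M.State) (n : ℕ) (v : ℕ → M.Obj) (t : OTm M)
    (ht : tvars M t ⊆ {k : ℕ | k < n}) :
    ttval M (List.ofFn (fun j : Fin n => (Sum.inl (v j) : V M)) ++ staTuple M Γ) (TT M n t) =
      teval M (fun k => Sum.inl (v k)) Γ t := by
  cases t with
  | const o => rfl
  | var k =>
    have hk : k < n := ht (by simp [tvars])
    simp [ttval, TT, teval, att, List.getD_eq_getElem?_getD, List.getElem?_append_left, hk]
  | down c =>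
    have e : n + (c.val + 1) - 1 = n + c.val := by omega
    simp [ttval, TT, teval, att, List.getD_eq_getElem?_getD, List.getElem?_append_right, staTuple]

/-- Fix a model-state pair `M,Γ`.  For object terms `t₁, t₂`, an
assignment `v`, and the object constant `i` identifying `Γ` in `Sta`
(`I(i) = (v*I)(↓id,Γ)`): `(v*I)(t₁,Γ) ≠ (v*I)(t₂,Γ)` iff
`⟨v(ϱ₁),…,v(ϱₙ), i⟩ ∈ FT((t₁≠t₂)(ϱ₁,…,ϱₙ))(I_M)`, where `ϱ₁,…,ϱₙ` is the list of
variables occurring in `t₁,t₂` (de Bruijn indices `0,…,n-1`) and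
`FT((t₁≠t₂)(ϱ₁,…,ϱₙ)) = π_{1,…,n+1} σ_{TT(t₁)≠TT(t₂)} (VT(ϱ₁,…,ϱₙ) × Sta)`. -/
theorem atomic_ne_correspondence (M : Model) (Γ : M.State) (n : ℕ) (t₁ t₂ : OTm M)
    (hvars : tvars M t₁ ∪ tvars M t₂ = {k : ℕ | k < n})
    (v : ℕ → M.Obj) (i : M.Obj) (hi : i = idval M Γ) :
    teval M (fun k => Sum.inl (v k)) Γ t₁ ≠ teval M (fun k => Sum.inl (v k)) Γ t₂ ↔
      (List.ofFn (fun j : Fin n => (Sum.inl (v j) : V M)) ++ [Sum.inl i]) ∈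
        proj M (List.range' 1 (n + 1))
          (selTne M (TT M n t₁) (TT M n t₂)
            (cprod M (VTl M (List.replicate n VKind.obj)) (Sta M))) := by
  subst hi
  have h1 : tvars M t₁ ⊆ {k : ℕ | k < n} := hvars ▸ Set.subset_union_left
  have h2 : tvars M t₂ ⊆ {k : ℕ | k < n} := hvars ▸ Set.subset_union_right
  rw [← ttval_aux M Γ n v t₁ h1, ← ttval_aux M Γ n v t₂ h2]
  constructor
  · intro h
    refine ⟨_, ⟨⟨_, ?_, _, ⟨Γ, rfl⟩, rfl⟩, h⟩, ?_⟩
    · show List.Forall₂ _ _ _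
      rw [List.forall₂_iff_get]
      refine ⟨by simp, ?_⟩
      intro k _ _
      simp [kindOk]
    · have := map_att_aux M Γ (List.ofFn (fun j : Fin n => (Sum.inl (v j) : V M)))
      rw [List.length_ofFn] at this
      exact this.symm
  · rintro ⟨_, ⟨⟨a, ha, _, ⟨Δ, rfl⟩, rfl⟩, hne⟩, he⟩
    have hl : a.length = n := by
      have := List.Forall₂.length_eq ha
      simpa using this.symm
    have hmap := map_att_aux M Δ a
    rw [hl] at hmap
    rw [hmap] at he
    obtain ⟨ea, ei⟩ := List.append_inj he (by simp [hl])
    have hG : Γ = Δ := M.id_inj _ _ (by simpa [idval] using ei)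
    subst hG
    rw [ea]
    exact hne

end KripkeDB
end

section
/- Fix a model-state pair M,Γ and let i be the object constant identifying Γ in Sta (i.e. I(i) = (v*I)(↓id,Γ)). Let a be an object constant and ↓c a relativized concept term with 𝔠(c)=k. Then (v*I)(a,Γ) = (v*I)(↓c,Γ) if and only if ⟨i⟩ ∈ π₁ σ_{'a'=k}(Sta)(I_M), equivalently, iff there is a tuple t ∈ Sta(I_M) with t(1)=i and t(k)=a. -/
namespace KripkeDB

theorem att_sta (M : Model) (Γ : M.State) (c : Fin M.m) :
    att M (staTuple M Γ) (c.val + 1) = Sum.inl (M.concept c Γ) := by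
  simp [att, staTuple, List.getD_eq_getElem?_getD]

theorem att_sta_one (M : Model) (Γ : M.State) :
    att M (staTuple M Γ) 1 = Sum.inl (idval M Γ) :=
  att_sta M Γ ⟨0, M.m_pos⟩

/-- Fix a model-state pair `M,Γ` and let `i` be the object constant
identifying `Γ` in `Sta` (`I(i) = (v*I)(↓id,Γ)`).  Let `a` be an object constant and
`↓c` a relativized concept term with `𝔠(c) = k`.  Then `(v*I)(a,Γ) = (v*I)(↓c,Γ)` iff
`⟨i⟩ ∈ π₁ σ_{'a'=k}(Sta)(I_M)`, equivalently, iff there is a tuple `t ∈ Sta(I_M)` with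
`t(1) = i` and `t(k) = a`. -/
theorem const_relativized_case (M : Model) (Γ : M.State) (a : M.Obj) (c : Fin M.m)
    (k : ℕ) (hk : k = c.val + 1) (v : ℕ → V M) (i : M.Obj) (hi : i = idval M Γ) :
    (teval M v Γ (OTm.const a) = teval M v Γ (OTm.down c) ↔
      ([Sum.inl i] : List (V M)) ∈
        proj M [1] (selT M (TTRes.con (Sum.inl a)) (TTRes.idx k) (Sta M)))
    ∧ (teval M v Γ (OTm.const a) = teval M v Γ (OTm.down c) ↔
      ∃ t ∈ Sta M, att M t 1 = (Sum.inl i : V M) ∧ att M t k = (Sum.inl a : V M)) := by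
  subst hk hi
  have key : teval M v Γ (OTm.const a) = teval M v Γ (OTm.down c) ↔
      ∃ t ∈ Sta M, att M t 1 = (Sum.inl (idval M Γ) : V M) ∧
        att M t (c.val + 1) = (Sum.inl a : V M) := by
    constructor
    · intro h
      exact ⟨staTuple M Γ, ⟨Γ, rfl⟩, att_sta_one M Γ, (att_sta M Γ c).trans h.symm⟩
    · rintro ⟨t, ⟨Δ, rfl⟩, h1, h2⟩
      rw [att_sta_one] at h1
      have hΔ : Δ = Γ := M.id_inj Δ Γ (Sum.inl.inj h1)
      subst hΔ
      rw [att_sta] at h2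
      exact h2.symm
  refine ⟨key.trans ?_, key⟩
  constructor
  · rintro ⟨t, ht, h1, h2⟩
    refine ⟨t, ⟨ht, h2.symm⟩, ?_⟩
    rw [List.map_cons, List.map_nil, h1]
  · rintro ⟨t, ⟨ht, h2⟩, h1⟩
    rw [List.map_cons, List.map_nil] at h1
    exact ⟨t, ht, (List.cons.inj h1).1.symm, h2.symm⟩

end KripkeDB
end

section
/- Fix a model-state pair M,Γ and let i be the object constant identifying Γ in Sta (i.e. I(i) = (v*I)(↓id,Γ)). Let ϱ be a variable and ↓c a relativized concept term with 𝔠(c)=k. Then for any assignment v: v(ϱ) = (v*I)(↓c,Γ) if and only if ⟨v(ϱ), i⟩ ∈ π_{1,2} σ_{1=k+1}(Obj × Sta)(I_M), and moreover π_{1,2} σ_{1=k+1}(Obj × Sta)(I_M) = π_{k,1} Sta(I_M). -/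
namespace KripkeDB

theorem att_cons_succ (M : Model) (a : V M) (t : List (V M)) (j : ℕ) :
    att M (a :: t) (j + 1 + 1) = att M t (j + 1) := by
  simp [att]

theorem att_cons_one (M : Model) (a : V M) (t : List (V M)) :
    att M (a :: t) 1 = a := by
  simp [att]

theorem mem_right (M : Model) (c : Fin M.m) (u : List (V M)) :
    u ∈ proj M [c.val + 1, 1] (Sta M) ↔
      ∃ Δ : M.State, u = [Sum.inl (M.concept c Δ), Sum.inl (idval M Δ)] := by
  constructor
  · rintro ⟨t, ⟨Δ, rfl⟩, rfl⟩
    exact ⟨Δ, by simp only [List.map, att_sta, att_sta_one]⟩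
  · rintro ⟨Δ, rfl⟩
    exact ⟨_, ⟨Δ, rfl⟩, by simp only [List.map, att_sta, att_sta_one]⟩

theorem mem_left (M : Model) (c : Fin M.m) (u : List (V M)) :
    u ∈ proj M [1, 2] (selEq M 1 (c.val + 1 + 1) (cprod M (ObjI M) (Sta M))) ↔
      ∃ Δ : M.State, u = [Sum.inl (M.concept c Δ), Sum.inl (idval M Δ)] := by
  have h2 : ∀ (a : V M) (t : List (V M)), att M (a :: t) 2 = att M t 1 :=
    fun a t => att_cons_succ M a t 0
  constructor
  · rintro ⟨t, ⟨⟨_, ⟨o, rfl⟩, _, ⟨Δ, rfl⟩, rfl⟩, h⟩, rfl⟩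
    simp only [List.cons_append, List.nil_append, att_cons_succ, att_cons_one, att_sta] at h
    refine ⟨Δ, ?_⟩
    simp only [List.cons_append, List.nil_append, List.map, h2, att_cons_one, att_sta_one, h]
  · rintro ⟨Δ, rfl⟩
    refine ⟨Sum.inl (M.concept c Δ) :: staTuple M Δ,
      ⟨⟨_, ⟨M.concept c Δ, rfl⟩, _, ⟨Δ, rfl⟩, rfl⟩, ?_⟩, ?_⟩
    · simp only [att_cons_succ, att_cons_one, att_sta]
    · simp only [List.map, h2, att_cons_one, att_sta_one]

/-- Fix a model-state pair `M,Γ` and let `i` be the object constant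
identifying `Γ` in `Sta` (`I(i) = (v*I)(↓id,Γ)`).  Let `ϱ` be an (object) variable and
`↓c` a relativized concept term with `𝔠(c) = k`.  Then for any assignment `v`:
`v(ϱ) = (v*I)(↓c,Γ)` iff `⟨v(ϱ), i⟩ ∈ π_{1,2} σ_{1=k+1}(Obj × Sta)(I_M)`, and moreover
`π_{1,2} σ_{1=k+1}(Obj × Sta)(I_M) = π_{k,1} Sta(I_M)`. -/
theorem var_relativized_case (M : Model) (Γ : M.State) (c : Fin M.m) (k : ℕ)
    (hk : k = c.val + 1) (i : M.Obj) (hi : i = idval M Γ) :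
    (∀ (v : ℕ → M.Obj) (ϱ : ℕ),
      ((Sum.inl (v ϱ) : V M) = teval M (fun j => Sum.inl (v j)) Γ (OTm.down c) ↔
        ([Sum.inl (v ϱ), Sum.inl i] : List (V M)) ∈
          proj M [1, 2] (selEq M 1 (k + 1) (cprod M (ObjI M) (Sta M)))))
    ∧ proj M [1, 2] (selEq M 1 (k + 1) (cprod M (ObjI M) (Sta M))) =
        proj M [k, 1] (Sta M) := by
  subst hk hi
  refine ⟨fun v ϱ => ?_, Set.ext fun u => (mem_left M c u).trans (mem_right M c u).symm⟩
  rw [mem_left]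
  constructor
  · intro h
    exact ⟨Γ, by rw [h]; rfl⟩
  · rintro ⟨Δ, h⟩
    simp only [List.cons.injEq, Sum.inl.injEq, and_true] at h
    have e : Γ = Δ := M.id_inj Γ Δ h.2
    subst e
    exact congrArg Sum.inl h.1

end KripkeDB
end

section
/- Let φ(ϱ₁,…,ϱₙ) be a modal query, π ∈ Π an accessibility relation symbol, and suppose (inductive hypothesis) that for every state Δ and assignment v: M,Δ ⊩_v φ iff ⟨v(ϱ₁),…,v(ϱₙ), id_Δ⟩ ∈ FT(φ(ϱ₁,…,ϱₙ))(I_M). Then for every state Γ and assignment v: M,Γ ⊩_v [π]φ(ϱ₁,…,ϱₙ) iff ⟨v(ϱ₁),…,v(ϱₙ), id_Γ⟩ ∈ FT(¬⟨π⟩¬φ(ϱ₁,…,ϱₙ))(I_M), where FT([π]φ(ϱ₁,…,ϱₙ)) is defined as FT(¬⟨π⟩¬φ(ϱ₁,…,ϱₙ)). -/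
namespace KripkeDB

theorem aux_sta (M : Model) (u : List (V M)) :
    u ∈ proj M [1] (Sta M) ↔ ∃ Γ : M.State, u = [Sum.inl (idval M Γ)] := by
  have key : ∀ Γ : M.State, [1].map (att M (staTuple M Γ)) = [Sum.inl (idval M Γ)] := by
    intro Γ
    have := M.m_pos
    simp [att, staTuple, idval, List.getD_eq_getElem?_getD, this]
  constructor
  · rintro ⟨t, ⟨Γ, rfl⟩, rfl⟩
    exact ⟨Γ, key Γ⟩
  · rintro ⟨Γ, rfl⟩
    exact ⟨_, ⟨Γ, rfl⟩, (key Γ).symm⟩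

theorem aux_vt (M : Model) (n : ℕ) (ks : Fin n → VKind) (v : Fin n → V M)
    (hv : ∀ j, kindOk M (ks j) (v j)) : List.ofFn v ∈ VTl M (List.ofFn ks) := by
  show List.Forall₂ _ _ _
  rw [List.forall₂_iff_get]
  refine ⟨by simp, ?_⟩
  intro i h1 h2
  simpa using hv _

theorem aux_att (M : Model) (l : List (V M)) (x a b c : V M) :
    (List.range' 1 l.length ++ [l.length + 2]).map (att M (l ++ [x, a, b, c])) = l ++ [a] ∧
    att M (l ++ [x, a, b, c]) (l.length + 1) = x ∧
    att M (l ++ [x, a, b, c]) (l.length + 3) = b ∧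
    att M (l ++ [x, a, b, c]) (l.length + 4) = c := by
  refine ⟨?_, ?_, ?_, ?_⟩
  · rw [List.map_append]
    congr 1
    · apply List.ext_getElem
      · simp
      · intro i h1 h2
        simp [att, List.getD_eq_getElem?_getD, List.getElem?_append, h2]
    · simp [att, List.getD_eq_getElem?_getD, List.getElem?_append]
  all_goals simp [att, List.getD_eq_getElem?_getD, List.getElem?_append]

/-- **box case.** Let `φ(ϱ₁,…,ϱₙ)` be a modal query (semantics `Tφ`,
translation image `Fφ`), `π ∈ Π` an accessibility relation symbol, and suppose
(inductive hypothesis) that for every state `Δ` and assignment `v`: `M,Δ ⊩_v φ` iff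
`⟨v(ϱ₁),…,v(ϱₙ), id_Δ⟩ ∈ Fφ`.  Then for every state `Γ` and assignment `v`:
`M,Γ ⊩_v [π]φ` iff `⟨v(ϱ₁),…,v(ϱₙ), id_Γ⟩ ∈ FT(¬⟨π⟩¬φ)(I_M)`, where
`FT(¬ψ) = (VT(ϱ₁,…,ϱₙ) × π₁(Sta)) − FT(ψ)` and
`FT(⟨π⟩ψ) = π_{1,…,n,n+2} σ_{n+4=π ∧ n+1=n+3}(FT(ψ) × Rel)`. -/
theorem box_case (M : Model) (n : ℕ) (ks : Fin n → VKind) (r : M.RelSym)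
    (Tφ : M.State → (Fin n → V M) → Prop) (Fφ : Inst M)
    (IH : ∀ (Δ : M.State) (v : Fin n → V M), (∀ j, kindOk M (ks j) (v j)) →
      (Tφ Δ v ↔ (List.ofFn v ++ [Sum.inl (idval M Δ)]) ∈ Fφ)) :
    ∀ (Γ : M.State) (v : Fin n → V M), (∀ j, kindOk M (ks j) (v j)) →
      ((∀ Δ : M.State, M.acc r Γ Δ → Tφ Δ v) ↔
        (List.ofFn v ++ [Sum.inl (idval M Γ)]) ∈
          cprod M (VTl M (List.ofFn ks)) (proj M [1] (Sta M)) \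
            proj M (List.range' 1 n ++ [n + 2])
              (selC M (n + 4) (Sum.inr (Sum.inr r))
                (selEq M (n + 1) (n + 3)
                  (cprod M (cprod M (VTl M (List.ofFn ks)) (proj M [1] (Sta M)) \ Fφ)
                    (RelI M))))) := by
  intro Γ v hv
  have hvt := aux_vt M n ks v hv
  constructor
  · intro H
    refine ⟨⟨_, hvt, _, (aux_sta M _).2 ⟨Γ, rfl⟩, rfl⟩, ?_⟩
    rintro ⟨t, ⟨⟨⟨p, ⟨⟨l, hl, u, hu, rfl⟩, hF⟩, q, ⟨r', Γ', Δ, hacc, rfl⟩, rfl⟩, h1⟩, h2⟩, heq⟩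
    obtain ⟨Δ', rfl⟩ := (aux_sta M _).1 hu
    have hlen : l.length = n := by
      have := List.Forall₂.length_eq hl
      simpa using this.symm
    subst hlen
    obtain ⟨e1, e2, e3, e4⟩ := aux_att M l (Sum.inl (idval M Δ')) (Sum.inl (idval M Γ'))
      (Sum.inl (idval M Δ)) (Sum.inr (Sum.inr r'))
    simp only [List.append_assoc, List.cons_append, List.nil_append] at h1 h2 heq
    rw [e2, e3] at h1
    rw [e4] at h2
    rw [e1] at heq
    have hr : r' = r := by simpa using h2
    have hd : Δ' = Δ := M.id_inj _ _ (by simpa [idval] using h1)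
    obtain ⟨hlv, hg⟩ := List.append_inj' heq rfl
    have hG : Γ = Γ' := M.id_inj _ _ (by simpa [idval] using hg)
    subst hr hd hG
    apply hF
    rw [← hlv]
    exact (IH _ v hv).1 (H _ hacc)
  · rintro ⟨-, H⟩ Δ hacc
    by_contra hT
    apply H
    obtain ⟨e1, e2, e3, e4⟩ := aux_att M (List.ofFn v) (Sum.inl (idval M Δ)) (Sum.inl (idval M Γ))
      (Sum.inl (idval M Δ)) (Sum.inr (Sum.inr r))
    rw [List.length_ofFn] at e1 e2 e3 e4
    refine ⟨_, ⟨⟨⟨List.ofFn v ++ [Sum.inl (idval M Δ)], ⟨⟨_, hvt, _, (aux_sta M _).2 ⟨Δ, rfl⟩, rfl⟩,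
      fun h => hT ((IH Δ v hv).2 h)⟩, _, ⟨r, Γ, Δ, hacc, rfl⟩, rfl⟩, ?_⟩, ?_⟩, ?_⟩
    all_goals simp only [List.append_assoc, List.cons_append, List.nil_append]
    · rw [e2, e3]
    · rw [e4]
    · rw [e1]

end KripkeDB
end

section
/- Let ∀ϱ φ(ϱ₁,…,ϱₙ) be a modal query (so φ has free variables ϱ,ϱ₁,…,ϱₙ), let U = FT(φ(ϱ,ϱ₁,…,ϱₙ)), and suppose (inductive hypothesis) that for every state Δ and assignment v: M,Δ ⊩_v φ(ϱ,ϱ₁,…,ϱₙ) iff ⟨v(ϱ),v(ϱ₁),…,v(ϱₙ), id_Δ⟩ ∈ U(I_M). Then for every state Γ and assignment v: M,Γ ⊩_v ∀ϱ φ(ϱ₁,…,ϱₙ) iff ⟨v(ϱ₁),…,v(ϱₙ), id_Γ⟩ ∈ (π_{2,…,n+2}U − π_{2,…,n+2}((VT(ϱ) × π_{2,…,n+2}U) − U))(I_M). -/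
namespace KripkeDB

theorem map_att_cons (M : Model) (n : ℕ) (d : V M) (w : List (V M)) (hw : w.length = n + 1) :
    (List.range' 2 (n + 1)).map (att M (d :: w)) = w := by
  apply List.ext_getElem
  · simp [hw]
  · intro i h1 h2
    have e : 2 + i - 1 = i + 1 := by omega
    simp [att, e, h2]

theorem kind_ne (M : Model) (k : VKind) : ∃ d : V M, kindOk M k d := by
  cases k with
  | obj => exact ⟨deflt M, _, rfl⟩
  | con => exact ⟨Sum.inr (Sum.inl ⟨0, M.m_pos⟩), _, rfl⟩

/-- **universal case.** Let `∀ϱ φ(ϱ₁,…,ϱₙ)` be a modal query, so `φ`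
has free variables `ϱ,ϱ₁,…,ϱₙ` (semantics `Tφ`, with the value of `ϱ` as a separate
argument; translation image `U = FT(φ(ϱ,ϱ₁,…,ϱₙ))(I_M)`, whose tuples carry `ϱ` at
attribute 1, `ϱ₁,…,ϱₙ` at attributes `2,…,n+1` and the state id at attribute `n+2`,
as recorded by `hU`).  Suppose (inductive hypothesis) that for every state `Δ` and
assignment: `M,Δ ⊩ φ(ϱ,ϱ₁,…,ϱₙ)` iff `⟨v(ϱ),v(ϱ₁),…,v(ϱₙ), id_Δ⟩ ∈ U`.  Then for
every state `Γ` and assignment `v`: `M,Γ ⊩_v ∀ϱ φ(ϱ₁,…,ϱₙ)` iff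
`⟨v(ϱ₁),…,v(ϱₙ), id_Γ⟩ ∈ π_{2,…,n+2}U − π_{2,…,n+2}((VT(ϱ) × π_{2,…,n+2}U) − U)`. -/
theorem all_case (M : Model) (n : ℕ) (ks : Fin n → VKind) (kq : VKind)
    (Tφ : M.State → V M → (Fin n → V M) → Prop) (U : Inst M)
    (hU : U ⊆ cprod M (VTl M (kq :: List.ofFn ks)) (proj M [1] (Sta M)))
    (IH : ∀ (Δ : M.State) (d : V M) (v : Fin n → V M),
      kindOk M kq d → (∀ j, kindOk M (ks j) (v j)) →
      (Tφ Δ d v ↔ (d :: (List.ofFn v ++ [Sum.inl (idval M Δ)])) ∈ U)) :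
    ∀ (Γ : M.State) (v : Fin n → V M), (∀ j, kindOk M (ks j) (v j)) →
      ((∀ d : V M, kindOk M kq d → Tφ Γ d v) ↔
        (List.ofFn v ++ [Sum.inl (idval M Γ)]) ∈
          proj M (List.range' 2 (n + 1)) U \
            proj M (List.range' 2 (n + 1))
              (cprod M (VTl M [kq]) (proj M (List.range' 2 (n + 1)) U) \ U)) := by
  intro Γ v hv
  have hw : (List.ofFn v ++ [(Sum.inl (idval M Γ) : V M)]).length = n + 1 := by simp
  constructor
  · intro h
    refine ⟨?_, ?_⟩
    · obtain ⟨d, hd⟩ := kind_ne M kq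
      exact ⟨_, (IH Γ d v hd hv).1 (h d hd), (map_att_cons M n d _ hw).symm⟩
    · rintro ⟨t, ⟨⟨a, ha, u, ⟨s, hs, hu⟩, rfl⟩, hnU⟩, ht⟩
      have hlen : u.length = n + 1 := by simp [hu]
      obtain ⟨d, l, hd, hl, rfl⟩ := List.forall₂_cons_left_iff.1 ha
      rw [List.forall₂_nil_left_iff] at hl
      subst hl
      have e := map_att_cons M n d u hlen
      rw [List.singleton_append, e] at ht
      subst ht
      exact hnU ((IH Γ d v hd hv).1 (h d hd))
  · rintro ⟨h1, h2⟩ d hd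
    rw [IH Γ d v hd hv]
    by_contra hn
    refine h2 ⟨_, ⟨⟨[d], ?_, _, h1, rfl⟩, hn⟩, (map_att_cons M n d _ hw).symm⟩
    exact List.Forall₂.cons hd List.Forall₂.nil
end KripkeDB
end

section
/- Let ⟨λϱ.φ⟩(t)(ϱ₁,…,ϱₙ) be a modal query and suppose (inductive hypothesis) that for every state Δ and assignment v': M,Δ ⊩_{v'} φ(ϱ,ϱ₁,…,ϱₙ) iff ⟨v'(ϱ),v'(ϱ₁),…,v'(ϱₙ), id_Δ⟩ ∈ FT(φ(ϱ,ϱ₁,…,ϱₙ))(I_M). Then for every state Γ and assignment v: M,Γ ⊩_v ⟨λϱ.φ⟩(t)(ϱ₁,…,ϱₙ) iff ⟨v(ϱ₁),…,v(ϱₙ), id_Γ⟩ ∈ π_{2,…,n+2} σ_{1=n+3 ∧ n+2=n+4}(FT(φ(ϱ,ϱ₁,…,ϱₙ)) × π_{TT(t),1} Sta)(I_M). -/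
namespace KripkeDB

theorem map_att (M : Model) (d e a b : V M) (w : List (V M)) (n : ℕ) (h : w.length = n) :
    (List.range' 2 (n + 1)).map (att M ((d :: (w ++ [e])) ++ [a, b])) = w ++ [e] := by
  subst h
  apply List.ext_getElem
  · simp
  · intro i h1 h2
    have h3 : i < w.length + 1 := by simpa using h2
    have h4 : 2 + i - 1 = i + 1 := by omega
    have h5 : (w ++ e :: [a, b])[i]? = some ((w ++ [e])[i]) := by
      have : w ++ e :: [a, b] = (w ++ [e]) ++ [a, b] := by simp
      rw [this, List.getElem?_append_left h2, List.getElem?_eq_getElem h2]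
    simp [att, List.getD_eq_getElem?_getD, h4, h5]

theorem att_vals (M : Model) (d e a b : V M) (w : List (V M)) (n : ℕ) (h : w.length = n) :
    att M ((d :: (w ++ [e])) ++ [a, b]) 1 = d ∧
    att M ((d :: (w ++ [e])) ++ [a, b]) (n + 2) = e ∧
    att M ((d :: (w ++ [e])) ++ [a, b]) (n + 3) = a ∧
    att M ((d :: (w ++ [e])) ++ [a, b]) (n + 4) = b := by
  subst h
  refine ⟨?_, ?_, ?_, ?_⟩ <;>
    simp [att, List.getD_eq_getElem?_getD, List.getElem?_append_right]

/-- **predicate abstraction case.** Let `⟨λϱ.φ⟩(t)(ϱ₁,…,ϱₙ)` be a modal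
query, where `t = ↓c` is a relativized concept term with Sta-attribute `TT(t) = 𝔠(c)`
(semantics of `φ(ϱ,ϱ₁,…,ϱₙ)` is `Tφ`, with the value of the abstracted object variable
`ϱ` as a separate argument; translation image `Fφ = FT(φ(ϱ,ϱ₁,…,ϱₙ))(I_M)`, whose
tuples carry `ϱ` at attribute 1 and the state id at attribute `n+2`, as recorded by
`hF`).  Suppose (inductive hypothesis) that for every state `Δ` and assignment `v'`:
`M,Δ ⊩_{v'} φ(ϱ,ϱ₁,…,ϱₙ)` iff `⟨v'(ϱ),v'(ϱ₁),…,v'(ϱₙ), id_Δ⟩ ∈ Fφ`.  Then for every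
state `Γ` and assignment `v`: `M,Γ ⊩_v ⟨λϱ.φ⟩(t)` (i.e. `M,Γ ⊩ φ[ϱ/(v*I)(t,Γ)]`) iff
`⟨v(ϱ₁),…,v(ϱₙ), id_Γ⟩ ∈ π_{2,…,n+2} σ_{1=n+3 ∧ n+2=n+4}(Fφ × π_{TT(t),1} Sta)(I_M)`. -/
theorem lam_case (M : Model) (n : ℕ) (ks : Fin n → VKind) (c : Fin M.m)
    (Tφ : M.State → V M → (Fin n → V M) → Prop) (Fφ : Inst M)
    (hF : Fφ ⊆ cprod M (VTl M (VKind.obj :: List.ofFn ks)) (proj M [1] (Sta M)))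
    (IH : ∀ (Δ : M.State) (d : V M) (v' : Fin n → V M),
      kindOk M VKind.obj d → (∀ j, kindOk M (ks j) (v' j)) →
      (Tφ Δ d v' ↔ (d :: (List.ofFn v' ++ [Sum.inl (idval M Δ)])) ∈ Fφ)) :
    ∀ (Γ : M.State) (v : Fin n → V M), (∀ j, kindOk M (ks j) (v j)) →
      (Tφ Γ (Sum.inl (M.concept c Γ)) v ↔
        (List.ofFn v ++ [Sum.inl (idval M Γ)]) ∈
          proj M (List.range' 2 (n + 1))
            (selEq M 1 (n + 3)
              (selEq M (n + 2) (n + 4)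
                (cprod M Fφ (proj M [c.val + 1, 1] (Sta M)))))) := by
  intro Γ v hv
  rw [IH Γ _ v ⟨_, rfl⟩ hv]
  have hid : ∀ Δ : M.State, att M (staTuple M Δ) 1 = Sum.inl (idval M Δ) :=
    fun Δ => att_sta M Δ ⟨0, M.m_pos⟩
  constructor
  · intro h
    obtain ⟨h1, h2, h3, h4⟩ := att_vals M (Sum.inl (M.concept c Γ)) (Sum.inl (idval M Γ))
      (Sum.inl (M.concept c Γ)) (Sum.inl (idval M Γ)) (List.ofFn v) n (by simp)
    refine ⟨_, ⟨⟨⟨_, h, [Sum.inl (M.concept c Γ), Sum.inl (idval M Γ)],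
      ⟨_, ⟨Γ, rfl⟩, ?_⟩, rfl⟩, h2.trans h4.symm⟩, h1.trans h3.symm⟩,
      (map_att M _ _ _ _ _ n (by simp)).symm⟩
    simp [att_sta, hid]
  · rintro ⟨_, ⟨⟨⟨t, ht, _, ⟨_, ⟨Δ, rfl⟩, rfl⟩, rfl⟩, h24⟩, h13⟩, hmap⟩
    obtain ⟨x, hx, _, ⟨_, ⟨Θ, rfl⟩, rfl⟩, rfl⟩ := hF ht
    obtain ⟨d, w, hd, hw, rfl⟩ := List.forall₂_cons_left_iff.1 hx
    have hlen : w.length = n := by simpa using hw.length_eq.symm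
    simp only [List.map_cons, List.map_nil, hid, att_sta, List.cons_append] at *
    obtain ⟨h1, h2, h3, h4⟩ := att_vals M d (Sum.inl (idval M Θ))
      (Sum.inl (M.concept c Δ)) (Sum.inl (idval M Δ)) w n hlen
    have hm := map_att M d (Sum.inl (idval M Θ))
      (Sum.inl (M.concept c Δ)) (Sum.inl (idval M Δ)) w n hlen
    simp only [List.cons_append] at h1 h2 h3 h4 hm
    rw [h1, h3] at h13
    rw [h2, h4] at h24
    rw [hm] at hmap
    obtain ⟨e1, e2⟩ := List.append_inj' hmap rfl
    have e3 : idval M Γ = idval M Θ := by simpa using e2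
    have e4 : Γ = Θ := M.id_inj _ _ e3
    have e5 : Θ = Δ := M.id_inj _ _ (Sum.inl.inj h24)
    subst e4 e5
    rw [e1, ← h13]
    exact ht

end KripkeDB
end
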